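/- arXiv:2010.10408 — 8 statements merged into one kernel-verified Lean document; each statement's English description precedes it below -/
import Mathlib

section
/- Let Δ ≥ 1 and let 𝒢 = (V,(E_t)_{t=1}^τ) be a temporal graph whose lifetime τ is a multiple of Δ. Let ν' be the maximum, over all i ∈ [τ/Δ], of the vertex cover number of the static graph (V, ⋃_{t=Δ(i−1)+1}^{Δi} E_t), and let ν be the Δ-vertex cover number of 𝒢. Then ν' ≤ ν ≤ 2ν'. -/
/-- A temporal graph on vertex set `V`: a lifetime `tau` and edge sets `E t`
(undirected edges, modeled as `Sym2 V`) for each time step. Only times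
`1 ≤ t ≤ tau` give rise to time edges. -/
structure TemporalGraph (V : Type*) where
  tau : ℕ
  E : ℕ → Finset (Sym2 V)

variable {V : Type*}

/-- `(e, t)` is a time edge of `G`. -/
def IsTimeEdge (G : TemporalGraph V) (et : Sym2 V × ℕ) : Prop :=
  et.1 ∈ G.E et.2 ∧ 1 ≤ et.2 ∧ et.2 ≤ G.tau

/-- Two (undirected) edges share an endpoint. -/
def ShareEndpoint (e f : Sym2 V) : Prop := ∃ v, v ∈ e ∧ v ∈ f

/-- Two time edges are `Δ`-independent: the edges share no endpoint,
or the time labels are at least `Δ` apart. -/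
def DeltaIndep (Δ : ℕ) (x y : Sym2 V × ℕ) : Prop :=
  ¬ ShareEndpoint x.1 y.1 ∨ (Δ : ℤ) ≤ |(x.2 : ℤ) - (y.2 : ℤ)|

/-- A `Δ`-temporal matching of `G`: a set of time edges of `G` that are
pairwise `Δ`-independent. -/
def IsTemporalMatching (G : TemporalGraph V) (Δ : ℕ) (M : Finset (Sym2 V × ℕ)) : Prop :=
  (∀ et ∈ M, IsTimeEdge G et) ∧ ∀ x ∈ M, ∀ y ∈ M, x ≠ y → DeltaIndep Δ x y

/-- `M[a,b]`: the time edges of `M` with time label between `a` and `b`. -/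
def restrict (M : Finset (Sym2 V × ℕ)) (a b : ℕ) : Finset (Sym2 V × ℕ) :=
  M.filter (fun et => a ≤ et.2 ∧ et.2 ≤ b)

/-- `G[a,b]`: the temporal graph on `V` whose time edges are exactly those
time edges of `G` with time label between `a` and `b`. -/
def tgSlice (G : TemporalGraph V) (a b : ℕ) : TemporalGraph V :=
  { tau := G.tau, E := fun t => if a ≤ t ∧ t ≤ b then G.E t else ∅ }

/-- `ν` suffices as a `Δ`-vertex cover bound for `G`: every `Δ` consecutive
layers can be covered by at most `ν` vertices. -/
def IsDeltaVC (G : TemporalGraph V) (Δ ν : ℕ) : Prop :=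
  ∀ i, 1 ≤ i → i ≤ G.tau - Δ + 1 →
    ∃ S : Finset V, S.card ≤ ν ∧
      ∀ t ∈ Finset.Icc i (i + Δ - 1), ∀ e ∈ G.E t, ∃ v ∈ S, v ∈ e

/-- `ν` is the `Δ`-vertex cover number of `G` (the minimum such bound). -/
def IsDeltaVCNum (G : TemporalGraph V) (Δ ν : ℕ) : Prop :=
  IsDeltaVC G Δ ν ∧ ∀ μ, IsDeltaVC G Δ μ → ν ≤ μ

/-- The maximum size of a `Δ`-temporal matching of `G`. -/
noncomputable def maxMatchingSize (G : TemporalGraph V) (Δ : ℕ) : ℕ :=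
  sSup { k | ∃ M : Finset (Sym2 V × ℕ), IsTemporalMatching G Δ M ∧ M.card = k }

/-- The vertex cover number of a static graph given by its (finite) edge set:
the minimum size of a vertex set meeting every edge. -/
noncomputable def vcNum {V : Type*} (Es : Finset (Sym2 V)) : ℕ :=
  sInf { n | ∃ C : Finset V, C.card ≤ n ∧ ∀ e ∈ Es, ∃ v ∈ C, v ∈ e }

/-- The `Δ`-vertex cover number of a temporal graph. -/
noncomputable def deltaVCNum (G : TemporalGraph V) (Δ : ℕ) : ℕ :=
  sInf { n | IsDeltaVC G Δ n }

theorem vcNum_spec {V : Type*} (Es : Finset (Sym2 V)) :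
    ∃ C : Finset V, C.card ≤ vcNum Es ∧ ∀ e ∈ Es, ∃ v ∈ C, v ∈ e := by
  classical
  have hne : { n | ∃ C : Finset V, C.card ≤ n ∧ ∀ e ∈ Es, ∃ v ∈ C, v ∈ e }.Nonempty := by
    refine ⟨_, Es.image (fun e => e.out.1), le_rfl, ?_⟩
    intro e he
    exact ⟨e.out.1, Finset.mem_image_of_mem _ he, Sym2.out_fst_mem e⟩
  exact Nat.sInf_mem hne

/-- If the lifetime of `G` is `tau = L * Δ`, `ν'` is the maximum
over `i ∈ [L]` of the vertex cover number of the static graph formed by the union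
of layers `Δ(i-1)+1, …, Δi`, and `ν` is the `Δ`-vertex cover number of `G`, then
`ν' ≤ ν ≤ 2ν'`. -/
theorem statement2 {V : Type*} [DecidableEq V] (Δ L : ℕ) (hΔ : 1 ≤ Δ) (hL : 1 ≤ L)
    (G : TemporalGraph V) (htau : G.tau = L * Δ)
    (ν' : ℕ)
    (hν' : ν' = (Finset.Icc 1 L).sup
        (fun i => vcNum ((Finset.Icc (Δ * (i - 1) + 1) (Δ * i)).biUnion G.E)))
    (ν : ℕ) (hν : ν = deltaVCNum G Δ) :
    ν' ≤ ν ∧ ν ≤ 2 * ν' := by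
  subst hν' hν
  set ν' := (Finset.Icc 1 L).sup
        (fun i => vcNum ((Finset.Icc (Δ * (i - 1) + 1) (Δ * i)).biUnion G.E)) with hν'
  have hcov : ∀ j, ∃ C : Finset V, C.card ≤ ν' ∧ (j < L →
      ∀ t, Δ * j + 1 ≤ t → t ≤ Δ * (j + 1) → ∀ e ∈ G.E t, ∃ v ∈ C, v ∈ e) := by
    intro j
    by_cases hj : j < L
    · obtain ⟨C, hC, hC2⟩ :=
        vcNum_spec ((Finset.Icc (Δ * (j + 1 - 1) + 1) (Δ * (j + 1))).biUnion G.E)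
      refine ⟨C, hC.trans ?_, fun _ t h1 h2 e he => hC2 e ?_⟩
      · exact Finset.le_sup
          (f := fun i => vcNum ((Finset.Icc (Δ * (i - 1) + 1) (Δ * i)).biUnion G.E))
          (Finset.mem_Icc.2 ⟨by omega, by omega⟩)
      · exact Finset.mem_biUnion.2 ⟨t, Finset.mem_Icc.2 ⟨by simpa using h1, h2⟩, he⟩
    · exact ⟨∅, by simp, fun h => absurd h hj⟩
  have hmem : IsDeltaVC G Δ (2 * ν') := by
    intro i hi1 hi2
    obtain ⟨q, r, hr, hi⟩ : ∃ q r, r < Δ ∧ i = Δ * q + r + 1 := by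
      refine ⟨(i - 1) / Δ, (i - 1) % Δ, Nat.mod_lt _ (by omega), ?_⟩
      rw [Nat.div_add_mod]
      omega
    obtain ⟨C, hC, hC2⟩ := hcov q
    obtain ⟨D, hD, hD2⟩ := hcov (q + 1)
    refine ⟨C ∪ D, (Finset.card_union_le _ _).trans (by omega), ?_⟩
    intro t ht e he
    rw [Finset.mem_Icc] at ht
    have hle : Δ ≤ L * Δ := Nat.le_mul_of_pos_left _ hL
    have e1 : Δ * (q + 1) = Δ * q + Δ := by ring
    have e2 : Δ * (q + 1 + 1) = Δ * q + 2 * Δ := by ring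
    have hend : t ≤ Δ * L := by
      rw [mul_comm Δ L]
      omega
    by_cases h : t ≤ Δ * (q + 1)
    · have hq : q < L := by
        have : Δ * q < Δ * L := by omega
        exact Nat.lt_of_mul_lt_mul_left this
      obtain ⟨v, hv, hve⟩ := hC2 hq t (by omega) h e he
      exact ⟨v, Finset.mem_union_left _ hv, hve⟩
    · have hq : q + 1 < L := by
        have : Δ * (q + 1) < Δ * L := by omega
        exact Nat.lt_of_mul_lt_mul_left this
      obtain ⟨v, hv, hve⟩ := hD2 hq t (by omega) (by omega) e he
      exact ⟨v, Finset.mem_union_right _ hv, hve⟩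
  refine ⟨?_, Nat.sInf_le hmem⟩
  have hν : IsDeltaVC G Δ (deltaVCNum G Δ) := Nat.sInf_mem (s := { n | IsDeltaVC G Δ n }) ⟨_, hmem⟩
  refine Finset.sup_le fun i hi => ?_
  rw [Finset.mem_Icc] at hi
  obtain ⟨j, rfl⟩ : ∃ j, i = j + 1 := ⟨i - 1, by omega⟩
  have e1 : Δ * (j + 1) = Δ * j + Δ := by ring
  have hb : Δ * (j + 1) ≤ L * Δ := by
    rw [mul_comm L]
    exact Nat.mul_le_mul_left _ hi.2
  obtain ⟨S, hS, hS2⟩ := hν (Δ * j + 1) (by omega) (by omega)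
  refine Nat.sInf_le ⟨S, hS, ?_⟩
  intro e he
  obtain ⟨t, ht, het⟩ := Finset.mem_biUnion.1 he
  rw [Finset.mem_Icc, Nat.add_sub_cancel] at ht
  exact hS2 t (Finset.mem_Icc.2 ⟨by omega, by omega⟩) e het
end

section
/- Let Δ ≥ 1 and let 𝒢 = (V,(E_t)_{t=1}^τ) be a temporal graph. Suppose there is an a with 1 ≤ a and a+Δ−1 ≤ τ such that E_t = ∅ for all t ∈ [a, a+Δ−1]. Then the maximum size of a Δ-temporal matching of 𝒢 equals the maximum size of a Δ-temporal matching of 𝒢[1, a−1] plus the maximum size of a Δ-temporal matching of 𝒢[a+Δ, τ]. -/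
variable {V : Type*}

theorem matching_bdd (G : TemporalGraph V) (Δ : ℕ) :
    BddAbove { k | ∃ M : Finset (Sym2 V × ℕ), IsTemporalMatching G Δ M ∧ M.card = k } := by
  classical
  refine ⟨(((Finset.Icc 1 G.tau).biUnion G.E) ×ˢ (Finset.Icc 1 G.tau)).card, ?_⟩
  rintro k ⟨M, hM, rfl⟩
  apply Finset.card_le_card
  intro x hx
  obtain ⟨h1, h2, h3⟩ := hM.1 x hx
  simp only [Finset.mem_product, Finset.mem_biUnion, Finset.mem_Icc]
  exact ⟨⟨x.2, ⟨h2, h3⟩, h1⟩, h2, h3⟩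

theorem card_le_maxMatchingSize (G : TemporalGraph V) (Δ : ℕ) (M : Finset (Sym2 V × ℕ))
    (hM : IsTemporalMatching G Δ M) : M.card ≤ maxMatchingSize G Δ :=
  le_csSup (matching_bdd G Δ) ⟨M, hM, rfl⟩

theorem exists_maxMatching (G : TemporalGraph V) (Δ : ℕ) :
    ∃ M : Finset (Sym2 V × ℕ), IsTemporalMatching G Δ M ∧ M.card = maxMatchingSize G Δ :=
  Nat.sSup_mem (s := { k | ∃ M : Finset (Sym2 V × ℕ), IsTemporalMatching G Δ M ∧ M.card = k })
    ⟨0, ∅, by simp [IsTemporalMatching], rfl⟩ (matching_bdd G Δ)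

theorem isTimeEdge_tgSlice (G : TemporalGraph V) (a b : ℕ) (x : Sym2 V × ℕ) :
    IsTimeEdge (tgSlice G a b) x ↔ IsTimeEdge G x ∧ a ≤ x.2 ∧ x.2 ≤ b := by
  unfold IsTimeEdge tgSlice
  by_cases h : a ≤ x.2 ∧ x.2 ≤ b <;> simp [h]

/-- If `G` has `Δ` consecutive empty layers `[a, a+Δ-1] ⊆ [1,tau]`,
then the maximum size of a `Δ`-temporal matching of `G` equals the maximum size
of a `Δ`-temporal matching of `G[1, a-1]` plus that of `G[a+Δ, tau]`. -/
theorem statement3 {V : Type*} (Δ : ℕ) (hΔ : 1 ≤ Δ) (G : TemporalGraph V)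
    (a : ℕ) (ha : 1 ≤ a) (hb : a + Δ - 1 ≤ G.tau)
    (hempty : ∀ t ∈ Finset.Icc a (a + Δ - 1), G.E t = ∅) :
    maxMatchingSize G Δ =
      maxMatchingSize (tgSlice G 1 (a - 1)) Δ +
        maxMatchingSize (tgSlice G (a + Δ) G.tau) Δ := by
  classical
  apply le_antisymm
  · obtain ⟨M, hM, hc⟩ := exists_maxMatching G Δ
    rw [← hc, ← Finset.card_filter_add_card_filter_not (s := M) (fun x => x.2 < a)]
    apply Nat.add_le_add
    · apply card_le_maxMatchingSize
      refine ⟨fun x hx => ?_, fun x hx y hy => hM.2 x (Finset.mem_filter.1 hx).1 y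
        (Finset.mem_filter.1 hy).1⟩
      obtain ⟨hx, hlt⟩ := Finset.mem_filter.1 hx
      have h := hM.1 x hx
      exact (isTimeEdge_tgSlice _ _ _ _).2 ⟨h, h.2.1, by omega⟩
    · apply card_le_maxMatchingSize
      refine ⟨fun x hx => ?_, fun x hx y hy => hM.2 x (Finset.mem_filter.1 hx).1 y
        (Finset.mem_filter.1 hy).1⟩
      obtain ⟨hx, hlt⟩ := Finset.mem_filter.1 hx
      have h := hM.1 x hx
      refine (isTimeEdge_tgSlice _ _ _ _).2 ⟨h, ?_, h.2.2⟩
      by_contra hcon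
      have h0 := hempty x.2 (Finset.mem_Icc.2 ⟨by omega, by omega⟩)
      have h1 := h.1
      rw [h0] at h1
      simp at h1
  · obtain ⟨M, hM, hc⟩ := exists_maxMatching (tgSlice G 1 (a - 1)) Δ
    obtain ⟨N, hN, hd⟩ := exists_maxMatching (tgSlice G (a + Δ) G.tau) Δ
    have hM1 := fun x hx => (isTimeEdge_tgSlice _ _ _ _).1 (hM.1 x hx)
    have hN1 := fun x hx => (isTimeEdge_tgSlice _ _ _ _).1 (hN.1 x hx)
    have hdisj : Disjoint M N := by
      rw [Finset.disjoint_left]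
      intro x hx hy
      have h1 := (hM1 x hx).2
      have h2 := (hN1 x hy).2
      omega
    rw [← hc, ← hd, ← Finset.card_union_of_disjoint hdisj]
    apply card_le_maxMatchingSize
    refine ⟨fun x hx => ?_, fun x hx y hy hne => ?_⟩
    · rcases Finset.mem_union.1 hx with hx | hx
      · exact (hM1 x hx).1
      · exact (hN1 x hx).1
    · rcases Finset.mem_union.1 hx with hx | hx <;> rcases Finset.mem_union.1 hy with hy | hy
      · exact hM.2 x hx y hy hne
      · right
        have h1 := (hM1 x hx).2
        have h2 := (hN1 y hy).2
        rw [le_abs]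
        omega
      · right
        have h1 := (hN1 x hx).2
        have h2 := (hM1 y hy).2
        rw [le_abs]
        omega
      · exact hN.2 x hx y hy hne
end

section
/- Let Δ ≥ 1, let 𝒢 = (V,(E_t)_{t=1}^τ) be a temporal graph, and let d ≥ 1 with dΔ ≤ τ. Let M be a Δ-temporal matching of 𝒢 and let M' := M[Δ(d−1)+1, Δd]. Let N be a Δ-temporal matching of 𝒢 all of whose time labels lie in [Δ(d−1)+1, Δd], such that |N| ≥ |M'| and every time edge of N is Δ-independent from every time edge of M \ M'. Then (M \ M') ∪ N is a Δ-temporal matching of 𝒢 of size at least |M|. -/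
variable {V : Type*}

/-- Let `M` be a `Δ`-temporal matching of `G`, let
`M' = M[Δ(d-1)+1, Δd]`, and let `N` be a `Δ`-temporal matching of `G` with all
time labels in `[Δ(d-1)+1, Δd]` such that `|N| ≥ |M'|` and every time edge of `N`
is `Δ`-independent from every time edge of `M \ M'`. Then `(M \ M') ∪ N` is a
`Δ`-temporal matching of `G` of size at least `|M|`. -/
theorem statement4 {V : Type*} [DecidableEq V] (Δ d : ℕ) (hΔ : 1 ≤ Δ) (hd : 1 ≤ d)
    (G : TemporalGraph V) (htau : d * Δ ≤ G.tau)
    (M N : Finset (Sym2 V × ℕ)) (hM : IsTemporalMatching G Δ M)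
    (hN : IsTemporalMatching G Δ N)
    (hNwin : ∀ et ∈ N, Δ * (d - 1) + 1 ≤ et.2 ∧ et.2 ≤ Δ * d)
    (hcard : (restrict M (Δ * (d - 1) + 1) (Δ * d)).card ≤ N.card)
    (hindep : ∀ x ∈ N, ∀ y ∈ M \ restrict M (Δ * (d - 1) + 1) (Δ * d),
      DeltaIndep Δ x y) :
    IsTemporalMatching G Δ ((M \ restrict M (Δ * (d - 1) + 1) (Δ * d)) ∪ N) ∧
      M.card ≤ ((M \ restrict M (Δ * (d - 1) + 1) (Δ * d)) ∪ N).card := by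
  have hsub : restrict M (Δ * (d - 1) + 1) (Δ * d) ⊆ M := Finset.filter_subset _ _
  have hdisj : Disjoint (M \ restrict M (Δ * (d - 1) + 1) (Δ * d)) N := by
    rw [Finset.disjoint_left]
    intro x hx hxN
    rw [Finset.mem_sdiff] at hx
    exact hx.2 (Finset.mem_filter.mpr ⟨hx.1, hNwin x hxN⟩)
  refine ⟨⟨?_, ?_⟩, ?_⟩
  · intro et het
    rcases Finset.mem_union.mp het with h | h
    · exact hM.1 et (Finset.mem_sdiff.mp h).1
    · exact hN.1 et h
  · intro x hx y hy hxy
    rcases Finset.mem_union.mp hx with h | h <;> rcases Finset.mem_union.mp hy with h' | h'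
    · exact hM.2 x (Finset.mem_sdiff.mp h).1 y (Finset.mem_sdiff.mp h').1 hxy
    · rcases hindep y h' x h with h1 | h1
      · exact Or.inl fun ⟨v, hv, hw⟩ => h1 ⟨v, hw, hv⟩
      · exact Or.inr (by rwa [abs_sub_comm])
    · exact hindep x h y h'
    · exact hN.2 x h y h' hxy
  · rw [Finset.card_union_of_disjoint hdisj]
    have := Finset.card_sdiff_add_card_eq_card hsub
    omega
end

section
/- Let Δ ≥ 2 and let T be a Δ-postfix tree rooted at v with leaves v_1,…,v_Δ in postfix order. Let [a,b] be a nonempty proper subinterval of [Δ] with a = 1 or b = Δ, and let S := N_T(⋃_{i ∈ [Δ]\[a,b]} V(P_i)) be the [a,b]-separator of T, where P_i is the v_i–v path in T. Then (1) |S| ≤ ⌈log₂ Δ⌉ + 1, and (2) for every i ∈ [Δ], the v_i–v path in T contains a vertex from S if and only if i ∈ [a,b]. -/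
/-- A rooted tree on vertex type `α`, given by a parent function: the root is
its own parent and every vertex reaches the root by iterating `parent`. -/
structure RTree (α : Type*) where
  root : α
  parent : α → α
  parent_root : parent root = root
  reaches_root : ∀ v, ∃ n, parent^[n] v = root

namespace RTree

variable {α : Type*} (T : RTree α)

/-- `v` is a descendant of `u` (possibly `v = u`). -/
def Desc (u v : α) : Prop := ∃ n, T.parent^[n] v = u

/-- The vertex set `V(P_v)` of the (unique) path from `v` to the root. -/
def pathSet (v : α) : Set α := { u | T.Desc u v }

/-- `w` is a child of `u`. -/
def IsChild (w u : α) : Prop := w ≠ T.root ∧ T.parent w = u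

/-- A leaf is a vertex with no children. -/
def IsLeaf (v : α) : Prop := ∀ w, ¬ T.IsChild w v

/-- Two vertices are adjacent in the (undirected) tree iff one is a child of
the other. -/
def Adj (u w : α) : Prop := T.IsChild u w ∨ T.IsChild w u

/-- The neighborhood `N_T(X)` of a vertex set `X`: vertices outside `X`
adjacent to some vertex of `X`. -/
def nbhd (X : Set α) : Set α := { v | v ∉ X ∧ ∃ u ∈ X, T.Adj v u }

/-- The depth of `v`: its distance to the root. -/
noncomputable def depth (v : α) : ℕ := sInf { n | T.parent^[n] v = T.root }

end RTree

/-- A `Δ`-postfix tree: a rooted full binary tree of depth at most `⌈log₂ Δ⌉`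
whose leaves are exactly `leaf 1, …, leaf Δ`, listed in post order (for every
vertex `u`, the set of indices of leaves below `u` is a set of consecutive
integers). -/
structure DeltaPostfixTree (α : Type*) (Δ : ℕ) extends RTree α where
  leaf : ℕ → α
  leaf_isLeaf : ∀ i ∈ Finset.Icc 1 Δ, toRTree.IsLeaf (leaf i)
  leaf_injOn : ∀ i ∈ Finset.Icc 1 Δ, ∀ j ∈ Finset.Icc 1 Δ, leaf i = leaf j → i = j
  leaf_surj : ∀ v, toRTree.IsLeaf v → ∃ i ∈ Finset.Icc 1 Δ, leaf i = v
  full_binary : ∀ v, ¬ toRTree.IsLeaf v →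
    {w | toRTree.IsChild w v}.ncard = 2
  depth_le : ∀ v, toRTree.depth v ≤ Nat.clog 2 Δ
  post_order : ∀ u, ∀ i ∈ Finset.Icc 1 Δ, ∀ j ∈ Finset.Icc 1 Δ, ∀ k ∈ Finset.Icc 1 Δ,
    i ≤ j → j ≤ k → toRTree.Desc u (leaf i) → toRTree.Desc u (leaf k) →
    toRTree.Desc u (leaf j)

/-- The `[a,b]`-separator of a `Δ`-postfix tree:
`S = N_T(⋃_{i ∈ [Δ] \ [a,b]} V(P_i))`, where `P_i` is the path from the `i`-th
leaf to the root. -/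
def separator {α : Type*} {Δ : ℕ} (T : DeltaPostfixTree α Δ) (a b : ℕ) : Set α :=
  T.toRTree.nbhd
    (⋃ i ∈ (Finset.Icc 1 Δ \ Finset.Icc a b), T.toRTree.pathSet (T.leaf i))

namespace RTree

variable {α : Type*} (T : RTree α)

theorem iter_root (n : ℕ) : T.parent^[n] T.root = T.root :=
  Function.iterate_fixed T.parent_root n

theorem iter_depth (v : α) : T.parent^[T.depth v] v = T.root :=
  Nat.sInf_mem (s := {n | T.parent^[n] v = T.root}) (T.reaches_root v)

theorem depth_le_of {v : α} {n : ℕ} (h : T.parent^[n] v = T.root) : T.depth v ≤ n :=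
  Nat.sInf_le (s := {n | T.parent^[n] v = T.root}) h

theorem depth_root : T.depth T.root = 0 :=
  Nat.le_zero.1 (T.depth_le_of (n := 0) rfl)

theorem eq_root_of_depth {v : α} (h : T.depth v = 0) : v = T.root := by
  have := T.iter_depth v
  rwa [h] at this

theorem depth_succ {v : α} (h : v ≠ T.root) : T.depth v = T.depth (T.parent v) + 1 := by
  apply le_antisymm
  · apply T.depth_le_of
    rw [Function.iterate_succ_apply]
    exact T.iter_depth _
  · have h1 := T.iter_depth v
    cases hd : T.depth v with
    | zero => exact absurd (T.eq_root_of_depth hd) h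
    | succ n =>
      rw [hd, Function.iterate_succ_apply] at h1
      have := T.depth_le_of h1
      omega

theorem depth_parent (v : α) : T.depth (T.parent v) = T.depth v - 1 := by
  by_cases h : v = T.root
  · rw [h, T.parent_root, T.depth_root]
  · rw [T.depth_succ h]; rfl

theorem depth_iter (k : ℕ) (v : α) : T.depth (T.parent^[k] v) = T.depth v - k := by
  induction k with
  | zero => rfl
  | succ k ih => rw [Function.iterate_succ_apply', depth_parent, ih]; omega

theorem desc_eq_aux {u u' w : α} {n m : ℕ} (hnm : n ≤ m) (h : T.parent^[n] w = u)
    (h' : T.parent^[m] w = u') (hd : T.depth u = T.depth u') : u = u' := by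
  obtain ⟨k, rfl⟩ := Nat.exists_eq_add_of_le hnm
  rw [add_comm, Function.iterate_add_apply, h] at h'
  have h1 := T.depth_iter k u
  rw [h'] at h1
  by_cases hk : k = 0
  · subst hk; exact h'
  · have : T.depth u = 0 := by omega
    have h2 : T.depth u' = 0 := by omega
    rw [T.eq_root_of_depth this, T.eq_root_of_depth h2]

theorem desc_eq {u u' w : α} (h : T.Desc u w) (h' : T.Desc u' w)
    (hd : T.depth u = T.depth u') : u = u' := by
  obtain ⟨n, hn⟩ := h
  obtain ⟨m, hm⟩ := h'
  rcases le_total n m with hl | hl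
  · exact T.desc_eq_aux hl hn hm hd
  · exact (T.desc_eq_aux hl hm hn hd.symm).symm

theorem desc_refl (u : α) : T.Desc u u := ⟨0, rfl⟩

theorem desc_parent {u v : α} (h : T.Desc u v) : T.Desc (T.parent u) v := by
  obtain ⟨n, hn⟩ := h
  exact ⟨n + 1, by rw [Function.iterate_succ_apply', hn]⟩

theorem desc_of_parent {u v : α} (h : T.Desc u (T.parent v)) : T.Desc u v := by
  obtain ⟨n, hn⟩ := h
  exact ⟨n + 1, by rw [Function.iterate_succ_apply, hn]⟩

theorem desc_trans {u v w : α} (h : T.Desc u v) (h' : T.Desc v w) : T.Desc u w := by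
  obtain ⟨n, hn⟩ := h
  obtain ⟨m, hm⟩ := h'
  exact ⟨n + m, by rw [Function.iterate_add_apply, hm, hn]⟩

theorem desc_root (v : α) : T.Desc T.root v := T.reaches_root v

theorem exists_child {p v : α} (h : T.Desc p v) (hne : v ≠ p) :
    ∃ w, T.IsChild w p ∧ T.Desc w v := by
  obtain ⟨n, hn⟩ := h
  induction n with
  | zero => exact absurd hn hne
  | succ n ih =>
    rw [Function.iterate_succ_apply'] at hn
    by_cases hr : T.parent^[n] v = T.root
    · apply ih
      rw [← hn, hr, T.parent_root]
    · exact ⟨_, ⟨hr, hn⟩, n, rfl⟩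

/-- Walking up from a vertex outside `X`, where the root is in `X`, one leaves
the complement of `X` through a child of a vertex of `X`. -/
theorem exists_exit {X : Set α} (hX : T.root ∈ X) {v : α} (hv : v ∉ X) :
    ∃ w, T.Desc w v ∧ w ∈ T.nbhd X := by
  obtain ⟨n, hn⟩ := T.reaches_root v
  induction n generalizing v with
  | zero => exact absurd (by rw [show v = T.root from hn]; exact hX) hv
  | succ n ih =>
    by_cases hp : T.parent v ∈ X
    · refine ⟨v, T.desc_refl v, hv, _, hp, Or.inl ⟨?_, rfl⟩⟩
      rintro rfl
      exact hv hX
    · obtain ⟨w, hw, hw'⟩ := ih hp hn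
      exact ⟨w, T.desc_of_parent hw, hw'⟩

end RTree

theorem exists_leaf_below {α : Type*} {Δ : ℕ} (T : DeltaPostfixTree α Δ) (v : α) :
    ∃ i ∈ Finset.Icc 1 Δ, T.toRTree.Desc v (T.leaf i) := by
  induction hk : Nat.clog 2 Δ - T.toRTree.depth v using Nat.strong_induction_on generalizing v with
  | _ k ih =>
    by_cases hl : T.toRTree.IsLeaf v
    · obtain ⟨i, hi, rfl⟩ := T.leaf_surj v hl
      exact ⟨i, hi, T.toRTree.desc_refl _⟩
    · have : ∃ w, T.toRTree.IsChild w v := by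
        by_contra h
        exact hl fun w hw => h ⟨w, hw⟩
      obtain ⟨w, hw⟩ := this
      have h1 := T.toRTree.depth_succ hw.1
      have h2 := T.depth_le w
      rw [hw.2] at h1
      obtain ⟨i, hi, hd⟩ := ih _ (by omega) w rfl
      refine ⟨i, hi, ?_⟩
      have := T.toRTree.desc_parent hd
      rwa [hw.2] at this

/-- For a `Δ`-postfix tree `T` (`Δ ≥ 2`) and a nonempty proper
subinterval `[a,b]` of `[Δ]` with `a = 1` or `b = Δ`, the `[a,b]`-separator `S`
satisfies: (1) `|S| ≤ ⌈log₂ Δ⌉ + 1`, and (2) for every `i ∈ [Δ]`, the path from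
the `i`-th leaf to the root contains a vertex of `S` iff `i ∈ [a,b]`. -/
theorem statement5 {α : Type*} [Fintype α] {Δ : ℕ} (hΔ : 2 ≤ Δ)
    (T : DeltaPostfixTree α Δ) (a b : ℕ) (ha : 1 ≤ a) (hab : a ≤ b) (hb : b ≤ Δ)
    (hend : a = 1 ∨ b = Δ) (hproper : ¬(a = 1 ∧ b = Δ)) :
    (separator T a b).ncard ≤ Nat.clog 2 Δ + 1 ∧
      ∀ i ∈ Finset.Icc 1 Δ,
        (T.toRTree.pathSet (T.leaf i) ∩ separator T a b).Nonempty ↔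
          (a ≤ i ∧ i ≤ b) := by
  classical
  set X : Set α :=
    ⋃ i ∈ (Finset.Icc 1 Δ \ Finset.Icc a b), T.toRTree.pathSet (T.leaf i) with hXdef
  have hS : separator T a b = T.toRTree.nbhd X := rfl
  have memX : ∀ u, u ∈ X ↔ ∃ i, (1 ≤ i ∧ i ≤ Δ) ∧ ¬ (a ≤ i ∧ i ≤ b) ∧
      T.toRTree.Desc u (T.leaf i) := by
    intro u
    rw [hXdef]
    simp only [Set.mem_iUnion, Finset.mem_sdiff, Finset.mem_Icc, exists_prop,
      RTree.pathSet, Set.mem_ofPred_eq, and_assoc]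
  -- the boundary leaf
  obtain ⟨c, hc1, hc2, hc3, hcb⟩ : ∃ c, 1 ≤ c ∧ c ≤ Δ ∧ ¬ (a ≤ c ∧ c ≤ b) ∧
      ∀ u i j, (1 ≤ i ∧ i ≤ Δ) → (1 ≤ j ∧ j ≤ Δ) → (a ≤ i ∧ i ≤ b) → ¬ (a ≤ j ∧ j ≤ b) →
        T.toRTree.Desc u (T.leaf i) → T.toRTree.Desc u (T.leaf j) →
        T.toRTree.Desc u (T.leaf c) := by
    by_cases h1 : a = 1
    · have hbΔ : b ≠ Δ := fun h => hproper ⟨h1, h⟩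
      refine ⟨b + 1, by omega, by omega, by omega, ?_⟩
      intro u i j hi hj hi' hj' hdi hdj
      exact T.post_order u i (Finset.mem_Icc.2 hi) (b + 1) (Finset.mem_Icc.2 (by omega)) j
        (Finset.mem_Icc.2 hj) (by omega) (by omega) hdi hdj
    · have hbΔ : b = Δ := by tauto
      refine ⟨a - 1, by omega, by omega, by omega, ?_⟩
      intro u i j hi hj hi' hj' hdi hdj
      exact T.post_order u j (Finset.mem_Icc.2 hj) (a - 1) (Finset.mem_Icc.2 (by omega)) i
        (Finset.mem_Icc.2 hi) (by omega) (by omega) hdj hdi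
  have hroot : T.root ∈ X := (memX _).2 ⟨c, ⟨hc1, hc2⟩, hc3, T.toRTree.desc_root _⟩
  -- every vertex of the separator is a child of an ancestor of the boundary leaf
  have key : ∀ x ∈ T.toRTree.nbhd X, x ∉ X ∧ x ≠ T.root ∧ T.parent x ∈ X ∧
      T.toRTree.Desc (T.parent x) (T.leaf c) := by
    rintro x ⟨hx, u, hu, hadj⟩
    have hxr : x ≠ T.root := by rintro rfl; exact hx hroot
    have hp : T.parent x ∈ X := by
      rcases hadj with h | h
      · rw [h.2]; exact hu
      · exfalso
        apply hx
        obtain ⟨i, hi, hi', hd⟩ := (memX _).1 hu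
        refine (memX _).2 ⟨i, hi, hi', ?_⟩
        rw [← h.2]
        exact T.toRTree.desc_parent hd
    refine ⟨hx, hxr, hp, ?_⟩
    obtain ⟨j, hj, hj', hdj⟩ := (memX _).1 hp
    obtain ⟨i, hi, hdi⟩ := exists_leaf_below T x
    have hi := Finset.mem_Icc.1 hi
    have hi' : a ≤ i ∧ i ≤ b := by
      by_contra h
      exact hx ((memX _).2 ⟨i, hi, h, hdi⟩)
    exact hcb _ i j hi hj hi' hj' (T.toRTree.desc_parent hdi) hdj
  rw [hS]
  refine ⟨?_, ?_⟩
  · have hle : (T.toRTree.nbhd X).ncard ≤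
        ((Finset.range (Nat.clog 2 Δ + 1) : Finset ℕ) : Set ℕ).ncard := by
      apply Set.ncard_le_ncard_of_injOn T.toRTree.depth
      · intro x _
        have := T.depth_le x
        simp only [Finset.coe_range, Set.mem_Iio]
        omega
      · intro x hx y hy hxy
        obtain ⟨hx1, hx2, hx3, hx4⟩ := key x hx
        obtain ⟨hy1, hy2, hy3, hy4⟩ := key y hy
        have hdx := T.toRTree.depth_succ hx2
        have hdy := T.toRTree.depth_succ hy2
        have hxy' : T.toRTree.depth x = T.toRTree.depth y := hxy
        have hpe : T.parent x = T.parent y := T.toRTree.desc_eq hx4 hy4 (by omega)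
        by_contra hne
        have hcx : T.toRTree.IsChild x (T.parent x) := ⟨hx2, rfl⟩
        have hcy : T.toRTree.IsChild y (T.parent x) := ⟨hy2, hpe.symm⟩
        have hnl : ¬ T.toRTree.IsLeaf (T.parent x) := fun h => h x hcx
        have hlc := T.leaf_isLeaf c (Finset.mem_Icc.2 ⟨hc1, hc2⟩)
        obtain ⟨w, hw, hdw⟩ := T.toRTree.exists_child hx4 (by
          intro h; rw [h] at hlc; exact hnl hlc)
        have hwX : w ∈ X := (memX _).2 ⟨c, ⟨hc1, hc2⟩, hc3, hdw⟩
        have hwx : w ≠ x := by rintro rfl; exact hx1 hwX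
        have hwy : w ≠ y := by rintro rfl; exact hy1 hwX
        obtain ⟨p, q, hpq, hset⟩ := Set.ncard_eq_two.1 (T.full_binary _ hnl)
        have m1 : x ∈ ({p, q} : Set α) := hset ▸ hcx
        have m2 : y ∈ ({p, q} : Set α) := hset ▸ hcy
        have m3 : w ∈ ({p, q} : Set α) := hset ▸ hw
        simp only [Set.mem_insert_iff, Set.mem_singleton_iff] at m1 m2 m3
        grind
    rwa [Set.ncard_coe_finset, Finset.card_range] at hle
  · intro i hi
    have hi1 := Finset.mem_Icc.1 hi
    constructor
    · rintro ⟨x, hx, hxS⟩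
      by_contra h
      exact hxS.1 ((memX _).2 ⟨i, hi1, h, hx⟩)
    · intro hab'
      have hnot : T.leaf i ∉ X := by
        intro h
        obtain ⟨j, hj, hj', hd⟩ := (memX _).1 h
        by_cases he : T.leaf j = T.leaf i
        · have := T.leaf_injOn j (Finset.mem_Icc.2 hj) i hi he
          subst this
          exact hj' hab'
        · obtain ⟨w, hw, -⟩ := T.toRTree.exists_child hd he
          exact T.leaf_isLeaf i hi w hw
      obtain ⟨w, hw, hw'⟩ := T.toRTree.exists_exit hroot hnot
      exact ⟨w, hw, hw'⟩
end

section
/- Let α, β, γ be non-negative integers with r = (α+β)γ ≥ 1, let U be a finite set, let ω : U → ℕ be a weight function, and let ℋ ⊆ 2^U be a γ-family (every member has exactly γ elements). Let 𝒮 := { S = H_1 ⊎ H_2 ⊎ … ⊎ H_α : H_1,…,H_α ∈ ℋ are pairwise disjoint }. Then there exists a max βγ-representative Ŝ ⊆ 𝒮 of 𝒮 with respect to the weight ω'(X) := Σ_{x∈X} ω(x) such that |Ŝ| ≤ binom(r, αγ). -/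
/-- `Shat` is a max `q`-representative of the family `S` over universe `U`
with respect to the weight `ω'`: for every set `Y` of size at most `q`, if some
`X ∈ S` is disjoint from `Y`, then some `Xhat ∈ Shat` is disjoint from `Y`
with `ω'(Xhat) ≥ ω'(X)`. -/
def IsMaxQRepresentative {U : Type*} [DecidableEq U] (q : ℕ)
    (S Shat : Set (Finset U)) (ω' : Finset U → ℕ) : Prop :=
  Shat ⊆ S ∧
    ∀ Y : Finset U, Y.card ≤ q →
      ∀ X ∈ S, Disjoint X Y →
        ∃ Xhat ∈ Shat, Disjoint Xhat Y ∧ ω' X ≤ ω' Xhat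

theorem greedy_basis {ι V : Type*} [DecidableEq ι] [AddCommGroup V] [Module ℚ V]
    (v : ι → V) (w : ι → ℕ) (T : Finset ι) :
    ∃ B : Finset ι, B ⊆ T ∧ LinearIndepOn ℚ v (B : Set ι) ∧
      ∀ X ∈ T, v X ∈ Submodule.span ℚ (v '' {Z | Z ∈ B ∧ w X ≤ w Z}) := by
  induction T using Finset.induction_on_min_value w with
  | empty => exact ⟨∅, by simp, by simp, by simp⟩
  | insert a s has hmin ih =>
    obtain ⟨B, hBs, hli, hsp⟩ := ih
    by_cases h : v a ∈ Submodule.span ℚ (v '' (B : Set ι))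
    · refine ⟨B, hBs.trans (Finset.subset_insert _ _), hli, ?_⟩
      intro X hX
      rcases Finset.mem_insert.1 hX with rfl | hX
      · refine Submodule.span_mono (Set.image_mono ?_) h
        intro Z hZ
        exact ⟨hZ, hmin Z (hBs hZ)⟩
      · exact hsp X hX
    · refine ⟨insert a B, Finset.insert_subset_insert _ hBs, ?_, ?_⟩
      · rw [Finset.coe_insert]
        exact hli.insert h
      · intro X hX
        rcases Finset.mem_insert.1 hX with rfl | hX
        · exact Submodule.subset_span ⟨X, ⟨Finset.mem_insert_self _ _, le_rfl⟩, rfl⟩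
        · refine Submodule.span_mono (Set.image_mono ?_) (hsp X hX)
          rintro Z ⟨h1, h2⟩
          exact ⟨Finset.mem_insert_of_mem h1, h2⟩

/-- the multiset of values of a tuple -/
def tupleSym {p q : ℕ} (g : Fin q → Fin (p + 1)) : Sym (Fin (p + 1)) q :=
  ⟨Finset.univ.val.map g, by simp⟩

/-- monomials of degree `q` in the coefficients -/
def monoVec (p q : ℕ) (P : Polynomial ℚ) : Sym (Fin (p + 1)) q → ℚ :=
  fun m => (m.1.map (fun k : Fin (p + 1) => P.coeff (k : ℕ))).prod

/-- the functional sending a polynomial to a product of its values -/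
def evalFun (p q : ℕ) (s : Fin q → ℚ) : (Sym (Fin (p + 1)) q → ℚ) →ₗ[ℚ] ℚ :=
  ∑ g : Fin q → Fin (p + 1), (∏ i, s i ^ (g i : ℕ)) • LinearMap.proj (tupleSym g)

theorem evalFun_monoVec (p q : ℕ) (s : Fin q → ℚ) (P : Polynomial ℚ) (hP : P.natDegree ≤ p) :
    evalFun p q s (monoVec p q P) = ∏ i, P.eval (s i) := by
  have h : ∀ i, P.eval (s i) = ∑ k : Fin (p + 1), P.coeff (k : ℕ) * s i ^ (k : ℕ) := by
    intro i
    rw [Polynomial.eval_eq_sum_range' (Nat.lt_succ_of_le hP), Finset.sum_range]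
  simp only [h]
  rw [Finset.prod_univ_sum, Fintype.piFinset_univ]
  simp only [evalFun, LinearMap.sum_apply, LinearMap.smul_apply, LinearMap.proj_apply,
    smul_eq_mul]
  refine Finset.sum_congr rfl fun g _ => ?_
  rw [Finset.prod_mul_distrib, mul_comm]
  congr 1
  simp only [monoVec, tupleSym, Finset.prod, Multiset.map_map, Function.comp_def]

theorem rep_exists {U : Type*} [Fintype U] [DecidableEq U] (p q : ℕ) (S : Set (Finset U))
    (hS : ∀ X ∈ S, X.card = p) (w : Finset U → ℕ) :
    ∃ Shat : Set (Finset U), IsMaxQRepresentative q S Shat w ∧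
      Shat.ncard ≤ Nat.choose (p + q) p := by
  classical
  obtain ⟨t, ht⟩ : ∃ t : Option U → ℚ, Function.Injective t :=
    ⟨fun u => ((Fintype.equivFin (Option U) u : ℕ) : ℚ), fun x y h => by
      simpa [Fin.val_inj] using h⟩
  let P : Finset U → Polynomial ℚ := fun X =>
    ∏ x ∈ X, (Polynomial.X - Polynomial.C (t (some x)))
  have hPdeg : ∀ X ∈ S, (P X).natDegree ≤ p := by
    intro X hX
    simp only [P, Polynomial.natDegree_finsetProd_X_sub_C_eq_card, hS X hX, le_refl]
  have hPev : ∀ (X : Finset U) (o : Option U), (P X).eval (t o) = 0 ↔ ∃ x ∈ X, o = some x := by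
    intro X o
    simp [P, Polynomial.eval_prod, Finset.prod_eq_zero_iff, sub_eq_zero, ht.eq_iff]
  obtain ⟨B, hBS, hli, hsp⟩ := greedy_basis (fun X => monoVec p q (P X)) w S.toFinite.toFinset
  have hBS' : ∀ X ∈ B, X ∈ S := fun X hX => by simpa using hBS hX
  refine ⟨(B : Set (Finset U)), ⟨fun X hX => hBS' X hX, ?_⟩, ?_⟩
  · intro Y hY X hX hd
    let s : Fin q → ℚ := fun i => t (Y.toList[(i : ℕ)]?)
    have key : ∀ Z ∈ S, evalFun p q s (monoVec p q (P Z)) ≠ 0 ↔ Disjoint Z Y := by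
      intro Z hZ
      rw [evalFun_monoVec p q s _ (hPdeg Z hZ), Finset.prod_ne_zero_iff, Finset.disjoint_left]
      constructor
      · intro h x hxZ hxY
        obtain ⟨i, hi, hix⟩ := List.getElem_of_mem (Finset.mem_toList.2 hxY)
        have hi' : i < q := by
          rw [Finset.length_toList] at hi
          omega
        refine h ⟨i, hi'⟩ (Finset.mem_univ _) ?_
        exact (hPev _ _).2 ⟨x, hxZ, by rw [← hix]; exact List.getElem?_eq_getElem hi⟩
      · intro h i _ h0
        obtain ⟨x, hxZ, hx⟩ := (hPev _ _).1 h0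
        exact h hxZ (Finset.mem_toList.1 (List.mem_of_getElem? hx))
    by_contra hno
    push Not at hno
    refine (key X hX).2 hd ?_
    have hle : Submodule.span ℚ ((fun X => monoVec p q (P X)) '' {Z | Z ∈ B ∧ w X ≤ w Z}) ≤
        LinearMap.ker (evalFun p q s) := by
      rw [Submodule.span_le]
      rintro _ ⟨Z, ⟨hZB, hwZ⟩, rfl⟩
      by_contra hne
      have := hno Z hZB ((key Z (hBS' Z hZB)).1 hne)
      omega
    exact hle (hsp X (by simpa using hX))
  · rw [Set.ncard_coe_finset]
    have h1 := LinearIndependent.fintype_card_le_finrank hli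
    rw [Module.finrank_fintype_fun_eq_card, Sym.card_sym_eq_choose] at h1
    simp only [Fintype.card_fin] at h1
    have h2 : p + 1 + q - 1 = p + q := by omega
    rw [h2, ← Nat.choose_symm_add] at h1
    simpa using h1

/-- Let `α, β, γ ≥ 0` with `r = (α+β)γ ≥ 1`, let `U` be a
finite set with weights `ω : U → ℕ`, and let `H` be a `γ`-family over `U`. Let
`S` be the family of all disjoint unions `H₁ ⊎ ⋯ ⊎ H_α` of `α` pairwise
disjoint members of `H`. Then there is a max `βγ`-representative `Shat ⊆ S`
of `S` w.r.t. `ω'(X) = Σ_{x ∈ X} ω x` with `|Shat| ≤ binom(r, αγ)`. -/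
theorem statement7 {U : Type*} [Fintype U] [DecidableEq U]
    (a b c : ℕ) (hr : 1 ≤ (a + b) * c)
    (ω : U → ℕ) (H : Set (Finset U)) (hH : ∀ A ∈ H, A.card = c)
    (S : Set (Finset U))
    (hS : S = { X : Finset U | ∃ f : Fin a → Finset U,
        (∀ i, f i ∈ H) ∧ (∀ i j, i ≠ j → Disjoint (f i) (f j)) ∧
        X = Finset.univ.biUnion f }) :
    ∃ Shat : Set (Finset U),
      IsMaxQRepresentative (b * c) S Shat (fun X => ∑ x ∈ X, ω x) ∧
        Shat.ncard ≤ Nat.choose ((a + b) * c) (a * c) := by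
  have hcard : ∀ X ∈ S, X.card = a * c := by
    intro X hX
    rw [hS] at hX
    obtain ⟨f, hf, hd, rfl⟩ := hX
    rw [Finset.card_biUnion fun i _ j _ hij => hd i j hij]
    simp [hH _ (hf _)]
  rw [add_mul]
  exact rep_exists (a * c) (b * c) S hcard _
end

section
/- There exists a constant c > 0 such that the following holds. For every Δ ≥ 2, every d ≥ 1, and every temporal graph 𝒢 of lifetime τ ≥ dΔ with Δ-vertex cover number ν, there exists a family ℳ of Δ-temporal matchings of 𝒢[Δ(d−1)+1, Δd] that is d-complete for 𝒢 and satisfies |ℳ| ≤ Δ^{c·ν}. -/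
variable {V : Type*}

/-- A family `ℳ` of sets of time edges is `d`-complete for `G` (w.r.t. `Δ`):
for every `Δ`-temporal matching `M` of `G` there is `M' ∈ ℳ` such that
`(M \ M[Δ(d-1)+1, Δd]) ∪ M'` is a `Δ`-temporal matching of `G` of size at
least `|M|`. -/
def DComplete {V : Type*} [DecidableEq V] (G : TemporalGraph V) (Δ d : ℕ)
    (ℳ : Finset (Finset (Sym2 V × ℕ))) : Prop :=
  ∀ M : Finset (Sym2 V × ℕ), IsTemporalMatching G Δ M →
    ∃ M' ∈ ℳ,
      IsTemporalMatching G Δ ((M \ restrict M (Δ * (d - 1) + 1) (Δ * d)) ∪ M') ∧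
      M.card ≤ ((M \ restrict M (Δ * (d - 1) + 1) (Δ * d)) ∪ M').card

/-- Representative families via a product-measure form of the Bollobas set-pair inequality. -/
theorem exists_rep_family {α ι : Type*} [Fintype α] [DecidableEq α] [DecidableEq ι]
    (F : Finset ι) (A : ι → Finset α) (p q k : ℕ) (hk : 2 ≤ k)
    (hA : ∀ i ∈ F, (A i).card ≤ p) :
    ∃ F' ⊆ F, (∀ B : Finset α, B.card ≤ q → (∃ i ∈ F, Disjoint (A i) B) →
      ∃ i ∈ F', Disjoint (A i) B) ∧ F'.card * (k - 1) ^ q ≤ k ^ (p + q) := by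
  classical
  let P : Finset ι → Prop := fun F' => ∀ B : Finset α, B.card ≤ q →
    (∃ i ∈ F, Disjoint (A i) B) → ∃ i ∈ F', Disjoint (A i) B
  obtain ⟨F', hF', hmin⟩ := Finset.exists_min_image (F.powerset.filter P) Finset.card
    ⟨F, Finset.mem_filter.2 ⟨Finset.mem_powerset.2 (Finset.Subset.refl F), fun _ _ h => h⟩⟩
  rw [Finset.mem_filter, Finset.mem_powerset] at hF'
  refine ⟨F', hF'.1, hF'.2, ?_⟩
  have hB : ∀ i ∈ F', ∃ B : Finset α, B.card ≤ q ∧ Disjoint (A i) B ∧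
      ∀ j ∈ F', j ≠ i → ¬ Disjoint (A j) B := by
    intro i hi
    by_contra hcon
    have h1 : P (F'.erase i) := by
      intro B hBq hex
      obtain ⟨j, hj, hjB⟩ := hF'.2 B hBq hex
      by_cases hji : j = i
      · subst hji
        by_contra h2
        apply hcon
        refine ⟨B, hBq, hjB, fun l hl hne hd => h2 ⟨l, Finset.mem_erase.2 ⟨hne, hl⟩, hd⟩⟩
      · exact ⟨j, Finset.mem_erase.2 ⟨hji, hj⟩, hjB⟩
    have h2 := hmin (F'.erase i) (by
      rw [Finset.mem_filter, Finset.mem_powerset]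
      exact ⟨(Finset.erase_subset _ _).trans hF'.1, h1⟩)
    have h3 := Finset.card_erase_lt_of_mem hi
    omega
  choose! B hBq hBd hBn using hB
  have : NeZero k := ⟨by omega⟩
  let T : ι → α → Finset (Fin k) := fun i a =>
    if a ∈ A i then {0} else if a ∈ B i then Finset.univ.erase 0 else Finset.univ
  have hdisj : (F' : Set ι).PairwiseDisjoint (fun i => Fintype.piFinset (T i)) := by
    intro i hi j hj hij
    rw [Function.onFun, Finset.disjoint_left]
    intro f hf1 hf2
    rw [Fintype.mem_piFinset] at hf1 hf2
    obtain ⟨a, ha1, ha2⟩ := Finset.not_disjoint_iff.1 (hBn j hj i hi hij)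
    have h1 := hf1 a
    have h2 := hf2 a
    have h3 : a ∉ A j := fun h => (Finset.disjoint_left.1 (hBd j hj) h) ha2
    simp [T, ha1] at h1
    simp [T, ha2, h3, h1] at h2
  have hcard : ∀ i ∈ F', k ^ (Fintype.card α) * (k - 1) ^ q ≤
      (Fintype.piFinset (T i)).card * k ^ (p + q) := by
    intro i hi
    have hc1 := hA i (hF'.1 hi)
    have hc2 := hBq i hi
    have hTc : ∀ a, (T i a).card * ((if a ∈ A i then k else 1) * (if a ∈ B i then k else 1))
        = k * (if a ∈ B i then (k - 1) else 1) := by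
      intro a
      by_cases h1 : a ∈ A i
      · have h2 : a ∉ B i := Finset.disjoint_left.1 (hBd i hi) h1
        simp [T, h1, h2]
      · by_cases h2 : a ∈ B i
        · simp [T, h1, h2, Finset.card_erase_of_mem]; ring
        · simp [T, h1, h2]
    have hprod : (Fintype.piFinset (T i)).card * (k ^ (A i).card * k ^ (B i).card)
        = k ^ (Fintype.card α) * (k - 1) ^ (B i).card := by
      have := Finset.prod_congr (rfl : (Finset.univ : Finset α) = Finset.univ)
        (fun a _ => hTc a)
      simp only [Finset.prod_mul_distrib, Finset.prod_ite_mem, Finset.univ_inter,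
        Finset.prod_const, Finset.card_univ] at this
      rw [Fintype.card_piFinset]
      exact this
    obtain ⟨r, rfl⟩ := Nat.exists_eq_add_of_le hc2
    obtain ⟨r', rfl⟩ := Nat.exists_eq_add_of_le hc1
    calc k ^ (Fintype.card α) * (k - 1) ^ ((B i).card + r)
        = (k ^ (Fintype.card α) * (k - 1) ^ (B i).card) * (k - 1) ^ r := by
          rw [pow_add, mul_assoc]
      _ = (Fintype.piFinset (T i)).card * (k ^ (A i).card * k ^ (B i).card) * (k - 1) ^ r := by
          rw [hprod]
      _ ≤ (Fintype.piFinset (T i)).card * (k ^ (A i).card * k ^ (B i).card) * k ^ (r + r') := by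
          refine Nat.mul_le_mul_left _ ?_
          calc (k - 1) ^ r ≤ k ^ r := Nat.pow_le_pow_left (by omega) _
            _ ≤ k ^ (r + r') := Nat.pow_le_pow_right (by omega) (by omega)
      _ = _ := by ring
  have hsum : ∑ i ∈ F', (Fintype.piFinset (T i)).card ≤ k ^ (Fintype.card α) := by
    rw [← Finset.card_biUnion hdisj]
    refine (Finset.card_le_univ _).trans ?_
    simp
  have hfin : k ^ (Fintype.card α) * (F'.card * (k - 1) ^ q) ≤
      k ^ (Fintype.card α) * k ^ (p + q) := by
    calc k ^ (Fintype.card α) * (F'.card * (k - 1) ^ q)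
        = ∑ i ∈ F', k ^ (Fintype.card α) * (k - 1) ^ q := by
          rw [Finset.sum_const, smul_eq_mul]; ring
      _ ≤ ∑ i ∈ F', (Fintype.piFinset (T i)).card * k ^ (p + q) := Finset.sum_le_sum hcard
      _ = (∑ i ∈ F', (Fintype.piFinset (T i)).card) * k ^ (p + q) := by rw [Finset.sum_mul]
      _ ≤ _ := Nat.mul_le_mul_right _ hsum
  exact Nat.le_of_mul_le_mul_left hfin (by positivity)

theorem pow_two_mul_le (D : ℕ) (hD : 1 ≤ D) : (2 * D) ^ D ≤ 2 * (2 * D - 1) ^ D := by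
  have hpos : (0 : ℝ) < 2 * D := by positivity
  have h := one_add_mul_le_pow (a := -(1 / (2 * (D : ℝ)))) (by
    have : 1 / (2 * (D : ℝ)) ≤ 1 := by
      rw [div_le_one hpos]
      have : (1 : ℝ) ≤ D := by exact_mod_cast hD
      linarith
    linarith) D
  have h1 : (1 : ℝ) + D * (-(1 / (2 * (D : ℝ)))) = 1 / 2 := by
    field_simp; norm_num
  have h2 : (1 : ℝ) + -(1 / (2 * (D : ℝ))) = (2 * D - 1) / (2 * D) := by
    field_simp; ring
  rw [h1, h2, div_pow, div_le_div_iff₀ (by norm_num) (by positivity)] at h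
  have h3 : ((2 * D - 1 : ℕ) : ℝ) = 2 * D - 1 := by
    rw [Nat.cast_sub (by omega)]; push_cast; ring
  have : (((2 * D) ^ D : ℕ) : ℝ) ≤ ((2 * (2 * D - 1) ^ D : ℕ) : ℝ) := by
    push_cast
    rw [h3]
    linarith
  exact_mod_cast this

theorem count_bound (N D ν : ℕ) (hD : 2 ≤ D)
    (h : N * (2 * D - 1) ^ (4 * ν * D) ≤ (2 * D) ^ (2 * ν + 4 * ν * D)) :
    N ≤ D ^ (8 * ν) := by
  have h1 : (2 * D) ^ (4 * ν * D) ≤ 2 ^ (4 * ν) * (2 * D - 1) ^ (4 * ν * D) := by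
    calc (2 * D) ^ (4 * ν * D) = ((2 * D) ^ D) ^ (4 * ν) := by rw [← pow_mul]; ring_nf
      _ ≤ (2 * (2 * D - 1) ^ D) ^ (4 * ν) := Nat.pow_le_pow_left (pow_two_mul_le D (by omega)) _
      _ = 2 ^ (4 * ν) * (2 * D - 1) ^ (4 * ν * D) := by
        rw [mul_pow, ← pow_mul, mul_comm D]
  have hpos : 0 < (2 * D - 1) ^ (4 * ν * D) := Nat.pow_pos (by omega)
  have h2 : N * (2 * D - 1) ^ (4 * ν * D) ≤
      ((2 * D) ^ (2 * ν) * 2 ^ (4 * ν)) * (2 * D - 1) ^ (4 * ν * D) := by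
    refine h.trans ?_
    rw [pow_add, mul_assoc ((2 * D) ^ (2 * ν))]
    exact Nat.mul_le_mul_left _ h1
  have h3 := Nat.le_of_mul_le_mul_right h2 hpos
  refine h3.trans ?_
  calc (2 * D) ^ (2 * ν) * 2 ^ (4 * ν) ≤ (D * D) ^ (2 * ν) * D ^ (4 * ν) := by gcongr
    _ = D ^ (8 * ν) := by
      rw [← pow_two, ← pow_mul, ← pow_add]; congr 1; ring

/-- A matching living in `Δ` consecutive layers has at most `ν` time edges. -/
theorem card_le_of_window {V : Type*} (G : TemporalGraph V) (Δ ν s : ℕ)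
    (hΔ : 1 ≤ Δ) (hτ : Δ ≤ G.tau) (hs : 1 ≤ s) (hvc : IsDeltaVC G Δ ν)
    (N : Finset (Sym2 V × ℕ)) (hN : IsTemporalMatching G Δ N)
    (hw : ∀ x ∈ N, s ≤ x.2 ∧ x.2 < s + Δ) : N.card ≤ ν := by
  classical
  obtain ⟨S, hS, hcov⟩ := hvc (min s (G.tau - Δ + 1)) (by omega) (by omega)
  have h1 : ∀ x ∈ N, ∃ v ∈ S, v ∈ x.1 := by
    intro x hx
    obtain ⟨ha, hb, hc⟩ := hN.1 x hx
    have := hw x hx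
    exact hcov x.2 (by rw [Finset.mem_Icc]; omega) x.1 ha
  rcases N.eq_empty_or_nonempty with rfl | ⟨x0, hx0⟩
  · simp
  obtain ⟨v0, -, -⟩ := h1 x0 hx0
  have : Nonempty V := ⟨v0⟩
  choose! f hf1 hf2 using h1
  refine (Finset.card_le_card_of_injOn f (fun x hx => hf1 x hx) ?_).trans hS
  intro x hx y hy hxy
  by_contra hne
  rcases hN.2 x hx y hy hne with h | h
  · exact h ⟨f x, hf2 x hx, hxy ▸ hf2 y hy⟩
  · have := hw x hx
    have := hw y hy
    rw [le_abs] at h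
    omega

theorem card_endpoints {V : Type*} [Fintype V] [DecidableEq V] (N : Finset (Sym2 V × ℕ)) :
    (N.biUnion (fun x => x.1.toFinset)).card ≤ 2 * N.card := by
  refine Finset.card_biUnion_le.trans ?_
  rw [mul_comm, ← smul_eq_mul, ← Finset.sum_const]
  refine Finset.sum_le_sum fun x _ => ?_
  rw [Sym2.card_toFinset]
  split_ifs <;> omega

theorem IsTemporalMatching.subset {V : Type*} {G : TemporalGraph V} {Δ : ℕ}
    {M N : Finset (Sym2 V × ℕ)} (hM : IsTemporalMatching G Δ M) (h : N ⊆ M) :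
    IsTemporalMatching G Δ N :=
  ⟨fun x hx => hM.1 x (h hx), fun x hx y hy => hM.2 x (h hx) y (h hy)⟩

theorem slice_matching_iff {V : Type*} (G : TemporalGraph V) (Δ a b : ℕ)
    (M : Finset (Sym2 V × ℕ)) : IsTemporalMatching (tgSlice G a b) Δ M ↔
      IsTemporalMatching G Δ M ∧ ∀ x ∈ M, a ≤ x.2 ∧ x.2 ≤ b := by
  have key : ∀ x : Sym2 V × ℕ, IsTimeEdge (tgSlice G a b) x ↔
      IsTimeEdge G x ∧ (a ≤ x.2 ∧ x.2 ≤ b) := by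
    intro x
    unfold IsTimeEdge tgSlice
    by_cases h : a ≤ x.2 ∧ x.2 ≤ b <;> simp [h]
  unfold IsTemporalMatching
  simp only [key]
  constructor
  · rintro ⟨h1, h2⟩
    exact ⟨⟨fun x hx => (h1 x hx).1, h2⟩, fun x hx => (h1 x hx).2⟩
  · rintro ⟨⟨h1, h2⟩, h3⟩
    exact ⟨fun x hx => ⟨h1 x hx, h3 x hx⟩, h2⟩

/-- vertex-time pairs used by `X`. -/
noncomputable def occ {V : Type*} [Fintype V] (b : ℕ) (X : Finset (Sym2 V × ℕ)) :
    Finset (V × Fin (b + 1)) := by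
  classical
  exact Finset.univ.filter (fun z => ∃ x ∈ X, x.2 = z.2.1 ∧ z.1 ∈ x.1)

theorem mem_occ {V : Type*} [Fintype V] (b : ℕ) (X : Finset (Sym2 V × ℕ))
    (z : V × Fin (b + 1)) : z ∈ occ b X ↔ ∃ x ∈ X, x.2 = z.2.1 ∧ z.1 ∈ x.1 := by
  simp [occ]

theorem card_occ {V : Type*} [Fintype V] [DecidableEq V] (b : ℕ) (X : Finset (Sym2 V × ℕ)) :
    (occ b X).card ≤ 2 * X.card := by
  classical
  have h : ((occ b X).image (fun z => (z.1, z.2.1))) ⊆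
      X.biUnion (fun x => x.1.toFinset.image (fun v => (v, x.2))) := by
    intro w hw
    rw [Finset.mem_image] at hw
    obtain ⟨z, hz, rfl⟩ := hw
    rw [mem_occ] at hz
    obtain ⟨x, hx, h1, h2⟩ := hz
    rw [Finset.mem_biUnion]
    refine ⟨x, hx, Finset.mem_image.2 ⟨z.1, by simpa using h2, by rw [h1]⟩⟩
  have hinj : Function.Injective (fun z : V × Fin (b + 1) => (z.1, z.2.1)) := by
    rintro ⟨u, i⟩ ⟨v, j⟩ h
    simp only [Prod.mk.injEq] at h
    ext1
    · exact h.1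
    · exact Fin.ext h.2
  rw [← Finset.card_image_of_injective _ hinj]
  refine (Finset.card_le_card h).trans (Finset.card_biUnion_le.trans ?_)
  rw [mul_comm, ← smul_eq_mul, ← Finset.sum_const]
  refine Finset.sum_le_sum fun x _ => Finset.card_image_le.trans ?_
  rw [Sym2.card_toFinset]
  split_ifs <;> omega

/-- vertex-time pairs in the window blocked by time edges of `M` outside the window. -/
noncomputable def blocked {V : Type*} [Fintype V] (Δ a b : ℕ) (M : Finset (Sym2 V × ℕ)) :
    Finset (V × Fin (b + 1)) := by
  classical
  exact Finset.univ.filter (fun z => a ≤ z.2.1 ∧ ∃ x ∈ M, ¬ (a ≤ x.2 ∧ x.2 ≤ b) ∧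
    z.1 ∈ x.1 ∧ x.2 < z.2.1 + Δ ∧ z.2.1 < x.2 + Δ)

theorem mem_blocked {V : Type*} [Fintype V] (Δ a b : ℕ) (M : Finset (Sym2 V × ℕ))
    (z : V × Fin (b + 1)) : z ∈ blocked Δ a b M ↔ a ≤ z.2.1 ∧ ∃ x ∈ M,
      ¬ (a ≤ x.2 ∧ x.2 ≤ b) ∧ z.1 ∈ x.1 ∧ x.2 < z.2.1 + Δ ∧ z.2.1 < x.2 + Δ := by
  simp [blocked]

theorem card_blocked {V : Type*} [Fintype V] [DecidableEq V] (G : TemporalGraph V)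
    (Δ a ν : ℕ) (hΔ : 1 ≤ Δ) (hτ : Δ ≤ G.tau) (hvc : IsDeltaVC G Δ ν)
    (M : Finset (Sym2 V × ℕ)) (hM : IsTemporalMatching G Δ M) (b : ℕ) (hb : b + 1 = a + Δ) :
    (blocked Δ a b M).card ≤ 4 * ν * Δ := by
  classical
  let L := M.filter (fun x => x.2 < a ∧ a ≤ x.2 + Δ)
  let R := M.filter (fun x => b < x.2 ∧ x.2 < b + 1 + Δ)
  have hL : L.card ≤ ν := by
    refine card_le_of_window G Δ ν (max 1 (a - Δ)) hΔ hτ (by omega) hvc L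
      (hM.subset (Finset.filter_subset _ _)) ?_
    intro x hx
    obtain ⟨h1, h2⟩ := Finset.mem_filter.1 hx
    have := (hM.1 x h1).2
    omega
  have hR : R.card ≤ ν := by
    refine card_le_of_window G Δ ν (b + 1) hΔ hτ (by omega) hvc R
      (hM.subset (Finset.filter_subset _ _)) ?_
    intro x hx
    obtain ⟨h1, h2⟩ := Finset.mem_filter.1 hx
    omega
  let U := L.biUnion (fun x => x.1.toFinset) ∪ R.biUnion (fun x => x.1.toFinset)
  have hU : U.card ≤ 4 * ν := by
    have h1 := Finset.card_union_le (L.biUnion (fun x => x.1.toFinset))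
      (R.biUnion (fun x => x.1.toFinset))
    have h2 := card_endpoints L
    have h3 := card_endpoints R
    change (_ ∪ _ : Finset V).card ≤ _
    omega
  have hinj : Function.Injective (fun z : V × Fin (b + 1) => (z.1, z.2.1)) := by
    rintro ⟨u, i⟩ ⟨v, j⟩ h
    simp only [Prod.mk.injEq] at h
    ext1
    · exact h.1
    · exact Fin.ext h.2
  have hsub : ((blocked Δ a b M).image (fun z => (z.1, z.2.1))) ⊆ U ×ˢ Finset.Ico a (a + Δ) := by
    intro w hw
    rw [Finset.mem_image] at hw
    obtain ⟨z, hz, rfl⟩ := hw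
    rw [mem_blocked] at hz
    obtain ⟨h0, x, hx, h1, h2, h3, h4⟩ := hz
    have hzlt := z.2.2
    rw [Finset.mem_product, Finset.mem_Ico]
    refine ⟨?_, h0, by omega⟩
    rw [Finset.mem_union, Finset.mem_biUnion, Finset.mem_biUnion]
    by_cases hxa : x.2 < a
    · exact Or.inl ⟨x, Finset.mem_filter.2 ⟨hx, by omega⟩, by simpa using h2⟩
    · exact Or.inr ⟨x, Finset.mem_filter.2 ⟨hx, by omega⟩, by simpa using h2⟩
  rw [← Finset.card_image_of_injective _ hinj]
  refine (Finset.card_le_card hsub).trans ?_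
  rw [Finset.card_product, Nat.card_Ico, Nat.add_sub_cancel_left]
  exact Nat.mul_le_mul_right _ hU

theorem main_aux {V : Type} [Fintype V] [DecidableEq V] (G : TemporalGraph V)
    (Δ d ν : ℕ) (hΔ : 2 ≤ Δ) (a b : ℕ) (ha1 : 1 ≤ a) (hb : b + 1 = a + Δ) (hτ : b ≤ G.tau)
    (hvc : IsDeltaVC G Δ ν) :
    ∃ ℳ : Finset (Finset (Sym2 V × ℕ)),
      (∀ M ∈ ℳ, IsTemporalMatching (tgSlice G a b) Δ M) ∧
      (∀ M : Finset (Sym2 V × ℕ), IsTemporalMatching G Δ M →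
        ∃ M' ∈ ℳ, IsTemporalMatching G Δ ((M \ restrict M a b) ∪ M') ∧
          M.card ≤ ((M \ restrict M a b) ∪ M').card) ∧
      ℳ.card ≤ Δ ^ (9 * ν) := by
  classical
  let F : ℕ → Finset (Finset (Sym2 V × ℕ)) := fun p =>
    ((Finset.univ ×ˢ Finset.range (b + 1)).powerset).filter
      (fun X => IsTemporalMatching (tgSlice G a b) Δ X ∧ X.card = p)
  have hF : ∀ p X, X ∈ F p ↔ IsTemporalMatching (tgSlice G a b) Δ X ∧ X.card = p := by
    intro p X
    simp only [F, Finset.mem_filter, Finset.mem_powerset, and_iff_right_iff_imp]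
    rintro ⟨h, -⟩ x hx
    have := ((slice_matching_iff _ _ _ _ _).1 h).2 x hx
    rw [Finset.mem_product, Finset.mem_range]
    exact ⟨Finset.mem_univ _, by omega⟩
  have hrep : ∀ p, p ≤ ν → ∃ F' ⊆ F p, (∀ B : Finset (V × Fin (b + 1)), B.card ≤ 4 * ν * Δ →
      (∃ i ∈ F p, Disjoint (occ b i) B) → ∃ i ∈ F', Disjoint (occ b i) B) ∧
      F'.card ≤ Δ ^ (8 * ν) := by
    intro p hp
    obtain ⟨F', h1, h2, h3⟩ := exists_rep_family (F p) (occ b) (2 * ν) (4 * ν * Δ) (2 * Δ)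
      (by omega) (by
        intro X hX
        have := card_occ b X
        have := ((hF p X).1 hX).2
        omega)
    exact ⟨F', h1, h2, count_bound _ _ _ hΔ h3⟩
  choose! F' hF1 hF2 hF3 using hrep
  refine ⟨(Finset.range (ν + 1)).biUnion F', ?_, ?_, ?_⟩
  · intro M hM
    obtain ⟨p, hp, hM⟩ := Finset.mem_biUnion.1 hM
    rw [Finset.mem_range] at hp
    exact ((hF p M).1 (hF1 p (by omega) hM)).1
  · intro M hM
    have hmem : ∀ x, x ∈ restrict M a b ↔ x ∈ M ∧ a ≤ x.2 ∧ x.2 ≤ b := by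
      intro x; simp [restrict]
    have hsub : restrict M a b ⊆ M := fun x hx => ((hmem x).1 hx).1
    have hN := hM.subset hsub
    have hNs : IsTemporalMatching (tgSlice G a b) Δ (restrict M a b) :=
      (slice_matching_iff _ _ _ _ _).2 ⟨hN, fun x hx => ((hmem x).1 hx).2⟩
    have hNc : (restrict M a b).card ≤ ν := by
      refine card_le_of_window G Δ ν a (by omega) (by omega) ha1 hvc _ hN ?_
      intro x hx
      have := ((hmem x).1 hx).2
      omega
    obtain ⟨X, hX, hXd⟩ := hF2 _ hNc (blocked Δ a b M)
      (card_blocked G Δ a ν (by omega) (by omega) hvc M hM b hb)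
      ⟨restrict M a b, (hF _ _).2 ⟨hNs, rfl⟩, by
        rw [Finset.disjoint_left]
        intro z hz1 hz2
        rw [mem_occ] at hz1
        rw [mem_blocked] at hz2
        obtain ⟨x, hx, hx1, hx2⟩ := hz1
        obtain ⟨h0, y, hy, hy1, hy2, hy3, hy4⟩ := hz2
        rw [hmem] at hx
        have hne : x ≠ y := by
          rintro rfl
          exact hy1 hx.2
        rcases hM.2 x hx.1 y hy hne with h | h
        · exact h ⟨z.1, hx2, hy2⟩
        · rw [le_abs] at h
          omega⟩
    obtain ⟨hXs, hXc⟩ := (hF _ _).1 (hF1 _ hNc hX)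
    obtain ⟨hXm, hXw⟩ := (slice_matching_iff _ _ _ _ _).1 hXs
    have hO : ∀ x, x ∈ M \ restrict M a b ↔ x ∈ M ∧ ¬ (a ≤ x.2 ∧ x.2 ≤ b) := by
      intro x
      rw [Finset.mem_sdiff, hmem]
      tauto
    have hcross : ∀ x ∈ X, ∀ y ∈ M \ restrict M a b, DeltaIndep Δ x y := by
      intro x hx y hy
      rw [hO] at hy
      by_contra hcon
      unfold DeltaIndep at hcon
      rw [not_or, not_not, not_le, abs_lt] at hcon
      obtain ⟨⟨v, hv1, hv2⟩, h1, h2⟩ := hcon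
      have hw := hXw x hx
      have hdl := Finset.disjoint_left.1 hXd
      refine @hdl (v, ⟨x.2, by omega⟩) ?_ ?_
      · rw [mem_occ]
        exact ⟨x, hx, rfl, hv1⟩
      · rw [mem_blocked]
        refine ⟨hw.1, y, hy.1, hy.2, hv2, ?_, ?_⟩ <;> simp only <;> omega
    have hsymm : ∀ x y : Sym2 V × ℕ, DeltaIndep Δ x y → DeltaIndep Δ y x := by
      rintro x y (h | h)
      · exact Or.inl fun ⟨v, h1, h2⟩ => h ⟨v, h2, h1⟩
      · exact Or.inr (by rw [abs_sub_comm]; exact h)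
    refine ⟨X, Finset.mem_biUnion.2 ⟨_, Finset.mem_range.2 (by omega), hX⟩, ⟨?_, ?_⟩, ?_⟩
    · intro x hx
      rcases Finset.mem_union.1 hx with h | h
      · exact hM.1 x ((hO x).1 h).1
      · exact hXm.1 x h
    · intro x hx y hy hne
      rcases Finset.mem_union.1 hx with h | h <;> rcases Finset.mem_union.1 hy with h' | h'
      · exact hM.2 x ((hO x).1 h).1 y ((hO y).1 h').1 hne
      · exact hsymm _ _ (hcross y h' x h)
      · exact hcross x h y h'
      · exact hXm.2 x h y h' hne
    · have hd : Disjoint (M \ restrict M a b) X := by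
        rw [Finset.disjoint_left]
        intro x h1 h2
        exact ((hO x).1 h1).2 (hXw x h2)
      rw [Finset.card_union_of_disjoint hd, hXc, Finset.card_sdiff_add_card_eq_card hsub]
  · calc ((Finset.range (ν + 1)).biUnion F').card
        ≤ ∑ p ∈ Finset.range (ν + 1), (F' p).card := Finset.card_biUnion_le
      _ ≤ ∑ p ∈ Finset.range (ν + 1), Δ ^ (8 * ν) := by
        refine Finset.sum_le_sum fun p hp => hF3 p ?_
        rw [Finset.mem_range] at hp
        omega
      _ = (ν + 1) * Δ ^ (8 * ν) := by simp
      _ ≤ Δ ^ ν * Δ ^ (8 * ν) := by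
        gcongr
        exact (Nat.lt_pow_self (by omega) : ν < Δ ^ ν)
      _ = Δ ^ (9 * ν) := by rw [← pow_add]; congr 1; ring

/-- There is a constant `c > 0` such that for every `Δ ≥ 2`,
`d ≥ 1`, and temporal graph `G` of lifetime at least `dΔ` with `Δ`-vertex cover
number `ν`, there is a family `ℳ` of `Δ`-temporal matchings of
`G[Δ(d-1)+1, Δd]` which is `d`-complete for `G` and has size at most `Δ^(c·ν)`. -/
theorem statement8 :
    ∃ c : ℕ, 0 < c ∧
      ∀ (V : Type) [Fintype V] [DecidableEq V] (G : TemporalGraph V) (Δ d ν : ℕ),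
        2 ≤ Δ → 1 ≤ d → d * Δ ≤ G.tau → IsDeltaVCNum G Δ ν →
        ∃ ℳ : Finset (Finset (Sym2 V × ℕ)),
          (∀ M ∈ ℳ, IsTemporalMatching (tgSlice G (Δ * (d - 1) + 1) (Δ * d)) Δ M) ∧
          DComplete G Δ d ℳ ∧
          ℳ.card ≤ Δ ^ (c * ν) := by
  refine ⟨9, by norm_num, ?_⟩
  intro V _ _ G Δ d ν hΔ hd hτ hν
  have hb : Δ * d + 1 = Δ * (d - 1) + 1 + Δ := by
    obtain ⟨e, rfl⟩ := Nat.exists_eq_add_of_le' hd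
    simp only [Nat.add_sub_cancel]
    ring
  exact main_aux G Δ d ν hΔ (Δ * (d - 1) + 1) (Δ * d) (by omega) hb
    (by rw [mul_comm]; exact hτ) hν.1
end

section
/- Let Δ ≥ 1, let 𝒢 = (V,(E_t)_{t=1}^τ) be a temporal graph with τ = LΔ for an integer L ≥ 1, and for each i ∈ [L] let ℳ_i be a family of Δ-temporal matchings of 𝒢[Δ(i−1)+1, Δi] that is i-complete for 𝒢. Define T_1[M] := |M| for M ∈ ℳ_1 and, for i > 1 and M ∈ ℳ_i, T_i[M] := max({ |M| + T_{i−1}[M'] : M' ∈ ℳ_{i−1} and M ∪ M' is a Δ-temporal matching of 𝒢 } ∪ {0}). Then for every i ∈ [L] and every Δ-temporal matching M of 𝒢, there exists M' ∈ ℳ_i such that T_i[M'] ≥ |M[1, Δi]| and M[1, Δ(i−1)] ∪ M' ∪ M[Δi+1, τ] is a Δ-temporal matching of 𝒢 of size at least |M|. -/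
variable {V : Type*}

open Classical in
/-- The dynamic-programming table: `Ttab G Δ ℳ 1 M = |M|`, and for `i > 1`,
`Ttab G Δ ℳ i M = max({|M| + Ttab G Δ ℳ (i-1) M' : M' ∈ ℳ (i-1), M ∪ M' is a
Δ-temporal matching of G} ∪ {0})`. (The value at `i = 0` is irrelevant.) -/
noncomputable def Ttab {V : Type*} [DecidableEq V] (G : TemporalGraph V) (Δ : ℕ)
    (ℳ : ℕ → Finset (Finset (Sym2 V × ℕ))) :
    ℕ → Finset (Sym2 V × ℕ) → ℕ
  | 0, M => M.card
  | 1, M => M.card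
  | (i + 2), M =>
      ((ℳ (i + 1)).filter (fun M' => IsTemporalMatching G Δ (M ∪ M'))).sup
        (fun M' => M.card + Ttab G Δ ℳ (i + 1) M')

/-- Removing the `i`-th window from a matching leaves the part before and the part after. -/
theorem sdiff_window_eq {V : Type*} [DecidableEq V] (Δ i : ℕ) (G : TemporalGraph V)
    (M : Finset (Sym2 V × ℕ)) (hM : IsTemporalMatching G Δ M) :
    M \ restrict M (Δ * (i - 1) + 1) (Δ * i) =
      restrict M 1 (Δ * (i - 1)) ∪ restrict M (Δ * i + 1) G.tau := by
  have hle : Δ * (i - 1) ≤ Δ * i := Nat.mul_le_mul_left _ (Nat.sub_le _ _)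
  ext x
  simp only [restrict, Finset.mem_sdiff, Finset.mem_union, Finset.mem_filter]
  constructor
  · rintro ⟨hx, h⟩
    obtain ⟨-, h1, h2⟩ := hM.1 x hx
    by_cases hc : x.2 ≤ Δ * (i - 1)
    · exact Or.inl ⟨hx, h1, hc⟩
    · refine Or.inr ⟨hx, ?_, h2⟩
      by_contra hcc
      exact h ⟨hx, by omega, by omega⟩
  · rintro (⟨hx, h1, h2⟩ | ⟨hx, h1, h2⟩)
    · exact ⟨hx, fun h => by omega⟩
    · exact ⟨hx, fun h => by omega⟩

/-- Members of a matching of a slice have their time labels in the slice. -/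
theorem slice_time {V : Type*} (Δ a b : ℕ) (G : TemporalGraph V)
    (M : Finset (Sym2 V × ℕ)) (hM : IsTemporalMatching (tgSlice G a b) Δ M) :
    ∀ x ∈ M, a ≤ x.2 ∧ x.2 ≤ b := by
  intro x hx
  have h := (hM.1 x hx).1
  simp only [tgSlice] at h
  by_contra hc
  rw [if_neg hc] at h
  simp at h

theorem IsTemporalMatching.mono {V : Type*} {Δ : ℕ} {G : TemporalGraph V}
    {M N : Finset (Sym2 V × ℕ)} (hM : IsTemporalMatching G Δ M) (h : N ⊆ M) :
    IsTemporalMatching G Δ N :=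
  ⟨fun x hx => hM.1 x (h hx), fun x hx y hy => hM.2 x (h hx) y (h hy)⟩

/-- Completeness, in the form used below. -/
theorem complete_step {V : Type*} [DecidableEq V] (Δ i : ℕ) (G : TemporalGraph V)
    (F : Finset (Finset (Sym2 V × ℕ))) (hF : DComplete G Δ i F)
    (M : Finset (Sym2 V × ℕ)) (hM : IsTemporalMatching G Δ M) :
    ∃ M' ∈ F, (restrict M (Δ * (i - 1) + 1) (Δ * i)).card ≤ M'.card ∧
        IsTemporalMatching G Δ
          (restrict M 1 (Δ * (i - 1)) ∪ M' ∪ restrict M (Δ * i + 1) G.tau) ∧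
        M.card ≤
          (restrict M 1 (Δ * (i - 1)) ∪ M' ∪ restrict M (Δ * i + 1) G.tau).card := by
  obtain ⟨M', hM', h1, h2⟩ := hF M hM
  refine ⟨M', hM', ?_, ?_⟩
  · have h3 := Finset.card_union_le (M \ restrict M (Δ * (i - 1) + 1) (Δ * i)) M'
    have hsub : restrict M (Δ * (i - 1) + 1) (Δ * i) ⊆ M := Finset.filter_subset _ _
    have h4 := Finset.card_sdiff_add_card_eq_card hsub
    omega
  · rw [sdiff_window_eq Δ i G M hM] at h1 h2
    rw [Finset.union_right_comm]
    exact ⟨h1, h2⟩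

/-- Let `tau = L·Δ` and for each `i ∈ [L]` let `ℳ i` be a
family of `Δ`-temporal matchings of `G[Δ(i-1)+1, Δi]` which is `i`-complete for
`G`. Then for every `i ∈ [L]` and every `Δ`-temporal matching `M` of `G`, there
is an `M' ∈ ℳ i` with `T_i[M'] ≥ |M[1, Δi]|` such that
`M[1, Δ(i-1)] ∪ M' ∪ M[Δi+1, tau]` is a `Δ`-temporal matching of `G` of size at
least `|M|`. -/
theorem statement9 {V : Type*} [DecidableEq V] (Δ L : ℕ) (hΔ : 1 ≤ Δ) (hL : 1 ≤ L)
    (G : TemporalGraph V) (htau : G.tau = L * Δ)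
    (ℳ : ℕ → Finset (Finset (Sym2 V × ℕ)))
    (hmatch : ∀ i ∈ Finset.Icc 1 L, ∀ M ∈ ℳ i,
      IsTemporalMatching (tgSlice G (Δ * (i - 1) + 1) (Δ * i)) Δ M)
    (hcomp : ∀ i ∈ Finset.Icc 1 L, DComplete G Δ i (ℳ i)) :
    ∀ i ∈ Finset.Icc 1 L, ∀ M : Finset (Sym2 V × ℕ), IsTemporalMatching G Δ M →
      ∃ M' ∈ ℳ i,
        (restrict M 1 (Δ * i)).card ≤ Ttab G Δ ℳ i M' ∧
        IsTemporalMatching G Δ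
          (restrict M 1 (Δ * (i - 1)) ∪ M' ∪ restrict M (Δ * i + 1) G.tau) ∧
        M.card ≤
          (restrict M 1 (Δ * (i - 1)) ∪ M' ∪ restrict M (Δ * i + 1) G.tau).card := by
  have main : ∀ k, k + 1 ≤ L → ∀ M : Finset (Sym2 V × ℕ), IsTemporalMatching G Δ M →
      ∃ M' ∈ ℳ (k + 1),
        (restrict M 1 (Δ * (k + 1))).card ≤ Ttab G Δ ℳ (k + 1) M' ∧
        IsTemporalMatching G Δ
          (restrict M 1 (Δ * k) ∪ M' ∪ restrict M (Δ * (k + 1) + 1) G.tau) ∧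
        M.card ≤
          (restrict M 1 (Δ * k) ∪ M' ∪ restrict M (Δ * (k + 1) + 1) G.tau).card := by
    intro k
    induction k with
    | zero =>
      intro hk M hM
      obtain ⟨M', hM', h1, h2, h3⟩ :=
        complete_step Δ 1 G (ℳ 1) (hcomp 1 (Finset.mem_Icc.2 ⟨le_refl _, hk⟩)) M hM
      exact ⟨M', hM', by simpa [Ttab] using h1, h2, h3⟩
    | succ k ih =>
      intro hk M hM
      have hmem : k + 2 ∈ Finset.Icc 1 L := Finset.mem_Icc.2 ⟨by omega, hk⟩
      obtain ⟨M', hM', h1, h2, h3⟩ :=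
        complete_step Δ (k + 2) G (ℳ (k + 2)) (hcomp _ hmem) M hM
      have hs := slice_time _ _ _ _ _ (hmatch _ hmem M' hM')
      simp only [show k + 2 - 1 = k + 1 from rfl] at h1 h2 h3 hs
      refine ⟨M', hM', ?_, h2, h3⟩
      obtain ⟨N, hN, g1, g2, -⟩ := ih (by omega) _ h2
      have hlt : Δ * (k + 1) ≤ Δ * (k + 2) := Nat.mul_le_mul_left _ (by omega)
      -- the modified matching agrees with `M` on the first windows
      have hsub : restrict M 1 (Δ * (k + 1)) ⊆
          restrict (restrict M 1 (Δ * (k + 1)) ∪ M' ∪ restrict M (Δ * (k + 2) + 1) G.tau)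
            1 (Δ * (k + 1)) := by
        intro x hx
        have hx2 := (Finset.mem_filter.1 hx).2
        exact Finset.mem_filter.2
          ⟨Finset.mem_union_left _ (Finset.mem_union_left _ hx), hx2⟩
      have g3 := (Finset.card_le_card hsub).trans g1
      have hun : IsTemporalMatching G Δ (M' ∪ N) := by
        refine g2.mono (Finset.union_subset ?_ ?_)
        · intro x hx
          refine Finset.mem_union_right _ (Finset.mem_filter.2 ⟨?_, (hs x hx).1, ?_⟩)
          · exact Finset.mem_union_left _ (Finset.mem_union_right _ hx)
          · exact (h2.1 x (Finset.mem_union_left _ (Finset.mem_union_right _ hx))).2.2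
        · intro x hx
          exact Finset.mem_union_left _ (Finset.mem_union_right _ hx)
      have hT : M'.card + Ttab G Δ ℳ (k + 1) N ≤ Ttab G Δ ℳ (k + 2) M' := by
        classical
        rw [Ttab]
        refine Finset.le_sup (f := fun M'' => M'.card + Ttab G Δ ℳ (k + 1) M'') ?_
        rw [Finset.mem_filter]
        refine ⟨hN, ?_⟩
        convert hun
      have hsplit : restrict M 1 (Δ * (k + 2)) ⊆
          restrict M 1 (Δ * (k + 1)) ∪ restrict M (Δ * (k + 1) + 1) (Δ * (k + 2)) := by
        intro x hx
        simp only [restrict, Finset.mem_union, Finset.mem_filter] at hx ⊢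
        by_cases hc : x.2 ≤ Δ * (k + 1)
        · exact Or.inl ⟨hx.1, hx.2.1, hc⟩
        · exact Or.inr ⟨hx.1, by omega, hx.2.2⟩
      have h5 := (Finset.card_le_card hsplit).trans (Finset.card_union_le _ _)
      change (restrict M 1 (Δ * (k + 2))).card ≤ Ttab G Δ ℳ (k + 2) M'
      omega
  intro i hi
  obtain ⟨hi1, hi2⟩ := Finset.mem_Icc.1 hi
  obtain ⟨k, rfl⟩ : ∃ k, i = k + 1 := ⟨i - 1, by omega⟩
  exact main k hi2
end

section
/- Let Δ ≥ 1, let 𝒢 = (V,(E_t)_{t=1}^τ) be a temporal graph with τ = LΔ for an integer L ≥ 1, and for each i ∈ [L] let ℳ_i be a family of Δ-temporal matchings of 𝒢[Δ(i−1)+1, Δi]. Define T_1[M] := |M| for M ∈ ℳ_1 and, for i > 1 and M ∈ ℳ_i, T_i[M] := max({ |M| + T_{i−1}[M'] : M' ∈ ℳ_{i−1} and M ∪ M' is a Δ-temporal matching of 𝒢 } ∪ {0}). Then for every i ∈ [L] and every M' ∈ ℳ_i with T_i[M'] > 0, there exists a Δ-temporal matching M of 𝒢[1, Δi] such that |M|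 = T_i[M'] and M[Δ(i−1)+1, Δi] = M'. -/
variable {V : Type*}

theorem indep_symm_aux {Δ : ℕ} {x y : Sym2 V × ℕ} (h : DeltaIndep Δ x y) : DeltaIndep Δ y x := by
  rcases h with h | h
  · left
    rintro ⟨v, h1, h2⟩
    exact h ⟨v, h2, h1⟩
  · right
    rwa [abs_sub_comm]

theorem timeEdge_slice_aux (G : TemporalGraph V) (a b : ℕ) (et : Sym2 V × ℕ) :
    IsTimeEdge (tgSlice G a b) et ↔ IsTimeEdge G et ∧ a ≤ et.2 ∧ et.2 ≤ b := by
  unfold IsTimeEdge tgSlice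
  by_cases h : a ≤ et.2 ∧ et.2 ≤ b
  · simp [h]
  · simp only [h, if_false, and_false]
    simp

theorem sup_attained_aux {α : Type*} {F : Finset α} {f : α → ℕ} (h : 0 < F.sup f) :
    ∃ N ∈ F, F.sup f = f N := by
  refine Finset.exists_mem_eq_sup F (Finset.nonempty_iff_ne_empty.2 ?_) f
  rintro rfl
  simp at h

/-- Let `tau = L·Δ` and for each `i ∈ [L]` let `ℳ i` be a
family of `Δ`-temporal matchings of `G[Δ(i-1)+1, Δi]`. Then for every `i ∈ [L]`
and every `M' ∈ ℳ i` with `T_i[M'] > 0`, there is a `Δ`-temporal matching `M`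
of `G[1, Δi]` with `|M| = T_i[M']` and `M[Δ(i-1)+1, Δi] = M'`. -/
theorem statement10 {V : Type*} [DecidableEq V] (Δ L : ℕ) (hΔ : 1 ≤ Δ) (hL : 1 ≤ L)
    (G : TemporalGraph V) (htau : G.tau = L * Δ)
    (ℳ : ℕ → Finset (Finset (Sym2 V × ℕ)))
    (hmatch : ∀ i ∈ Finset.Icc 1 L, ∀ M ∈ ℳ i,
      IsTemporalMatching (tgSlice G (Δ * (i - 1) + 1) (Δ * i)) Δ M) :
    ∀ i ∈ Finset.Icc 1 L, ∀ M' ∈ ℳ i, 0 < Ttab G Δ ℳ i M' →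
      ∃ M : Finset (Sym2 V × ℕ),
        IsTemporalMatching (tgSlice G 1 (Δ * i)) Δ M ∧
        M.card = Ttab G Δ ℳ i M' ∧
        restrict M (Δ * (i - 1) + 1) (Δ * i) = M' := by
  intro i hi
  obtain ⟨h1, h2⟩ := Finset.mem_Icc.1 hi
  clear hi
  induction i, h1 using Nat.le_induction with
  | base =>
    intro M' hM' _
    have hm := hmatch 1 (Finset.mem_Icc.2 ⟨le_rfl, hL⟩) M' hM'
    refine ⟨M', by simpa using hm, by simp [Ttab], ?_⟩
    refine Finset.filter_true_of_mem fun et het => ?_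
    exact ((timeEdge_slice_aux _ _ _ _).1 (hm.1 et het)).2
  | succ i h1 ih =>
    obtain ⟨i, rfl⟩ : ∃ j, i = j + 1 := ⟨i - 1, by omega⟩
    intro M' hM' hpos
    have hm := hmatch (i + 1 + 1) (Finset.mem_Icc.2 ⟨by omega, h2⟩) M' hM'
    have hm1 : ∀ et ∈ M', IsTimeEdge G et ∧ Δ * (i + 1) + 1 ≤ et.2 ∧ et.2 ≤ Δ * (i + 1 + 1) :=
      fun et het => (timeEdge_slice_aux _ _ _ _).1 (hm.1 et het)
    rw [Ttab] at hpos ⊢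
    obtain ⟨N, hN, hsup⟩ := sup_attained_aux hpos
    rw [hsup]
    replace hN := (@Finset.mem_filter _ _ (_) _ _).1 hN
    obtain ⟨hN1, hN2⟩ := hN
    have hmul : Δ * (i + 1 + 1) = Δ * (i + 1) + Δ := by ring
    have hmul' : Δ * (i + 1) = Δ * i + Δ := by ring
    rcases Nat.eq_zero_or_pos (Ttab G Δ ℳ (i + 1) N) with h0 | h0
    · refine ⟨M', ⟨fun et het => ?_, hm.2⟩, by simp [h0], ?_⟩
      · obtain ⟨ha, hb, hc⟩ := hm1 et het
        exact (timeEdge_slice_aux _ _ _ _).2 ⟨ha, by omega, hc⟩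
      · exact Finset.filter_true_of_mem fun et het => (hm1 et het).2
    · obtain ⟨M1, hM1, hcard, hres⟩ := ih (by omega) N hN1 h0
      have hM1' : ∀ et ∈ M1, IsTimeEdge G et ∧ 1 ≤ et.2 ∧ et.2 ≤ Δ * (i + 1) :=
        fun et het => (timeEdge_slice_aux _ _ _ _).1 (hM1.1 et het)
      have hcross : ∀ x ∈ M1, ∀ y ∈ M', x ≠ y → DeltaIndep Δ x y := by
        intro x hx y hy hxy
        obtain ⟨-, hx1, hx2⟩ := hM1' x hx
        obtain ⟨-, hy1, hy2⟩ := hm1 y hy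
        by_cases hb : Δ * i + 1 ≤ x.2
        · have hxN : x ∈ N := by
            rw [← hres]
            exact Finset.mem_filter.2 ⟨hx, hb, hx2⟩
          exact hN2.2 x (Finset.mem_union_right _ hxN) y (Finset.mem_union_left _ hy) hxy
        · right
          rw [abs_sub_comm]
          refine le_trans ?_ (le_abs_self _)
          omega
      refine ⟨M' ∪ M1, ⟨fun et het => ?_, ?_⟩, ?_, ?_⟩
      · rw [timeEdge_slice_aux]
        rcases Finset.mem_union.1 het with h | h
        · obtain ⟨ha, hb, hc⟩ := hm1 et h
          exact ⟨ha, by omega, hc⟩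
        · obtain ⟨ha, hb, hc⟩ := hM1' et h
          exact ⟨ha, by omega, by omega⟩
      · intro x hx y hy hxy
        rcases Finset.mem_union.1 hx with hx | hx <;> rcases Finset.mem_union.1 hy with hy | hy
        · exact hm.2 x hx y hy hxy
        · exact indep_symm_aux (hcross y hy x hx hxy.symm)
        · exact hcross x hx y hy hxy
        · exact hM1.2 x hx y hy hxy
      · rw [Finset.card_union_of_disjoint, hcard]
        rw [Finset.disjoint_left]
        intro x hx hx'
        have := hm1 x hx
        have := hM1' x hx'
        omega
      · ext x
        simp only [restrict, Finset.mem_filter, Finset.mem_union, Nat.add_sub_cancel]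
        constructor
        · rintro ⟨h | h, ha, hb⟩
          · exact h
          · have := hM1' x h
            omega
        · intro h
          exact ⟨Or.inl h, (hm1 x h).2⟩
end
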